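/- There exists an equilateral convex pentagon (all five side lengths equal to 1) whose interior angles satisfy 2B + A = 360° and 2E + C = 360° (the Type 7 conditions), and this pentagon is unique up to isometries of the plane. -/

import Mathlib

open EuclideanGeometry

noncomputable section

/-- The Euclidean plane. -/
abbrev Plane : Type := EuclideanSpace ℝ (Fin 2)

/-- A convex polygon with `n` vertices: `n` points of the plane in strictly convex
position, labeled in cyclic order (each segment joining cyclically consecutive
vertices lies on the boundary of the convex hull). -/
structure ConvexPolygon (n : ℕ) [NeZero n] where
  V : Fin n → Plane
  strictlyConvex : ∀ i : Fin n, V i ∉ convexHull ℝ (V '' {j | j ≠ i})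
  cyclic : ∀ i : Fin n, segment ℝ (V i) (V (i + 1)) ⊆ frontier (convexHull ℝ (Set.range V))

namespace ConvexPolygon

variable {n : ℕ} [NeZero n]

/-- The polygon, as a subset of the plane (the convex hull of its vertices). -/
def carrier (P : ConvexPolygon n) : Set Plane := convexHull ℝ (Set.range P.V)

/-- The interior angle (in radians) at the `i`-th vertex. -/
def angle (P : ConvexPolygon n) (i : Fin n) : ℝ :=
  EuclideanGeometry.angle (P.V (i - 1)) (P.V i) (P.V (i + 1))

/-- The length of the side joining the `i`-th vertex to the next one. -/
def side (P : ConvexPolygon n) (i : Fin n) : ℝ := dist (P.V i) (P.V (i + 1))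

end ConvexPolygon

/-- A convex pentagon.  Its angles `A, B, C, D, E` are `angle 0, …, angle 4` and
its sides `a, b, c, d, e` are `side 0, …, side 4`. -/
abbrev ConvexPentagon := ConvexPolygon 5

/-- `t` is an isometric copy of `P`. -/
def IsIsometricCopy (t P : Set Plane) : Prop :=
  ∃ g : Plane ≃ᵢ Plane, t = g '' P

/-- `T` is a monohedral tiling of the plane by isometric copies of `P`:
the tiles cover the plane and have pairwise disjoint interiors. -/
def IsMonohedralTiling (P : Set Plane) (T : Set (Set Plane)) : Prop :=
  (∀ t ∈ T, IsIsometricCopy t P) ∧ ⋃₀ T = Set.univ ∧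
    T.Pairwise fun t s => interior t ∩ interior s = ∅

/-- `x` is a vertex (extreme point) of the convex polygonal tile `t`. -/
def IsVertexOf (x : Plane) (t : Set Plane) : Prop := x ∈ Set.extremePoints ℝ t

/-- `e` is an edge (a full side) of the convex polygonal tile `t`: a segment
joining two distinct vertices of `t` that lies on the boundary of `t`. -/
def IsEdgeOf (e t : Set Plane) : Prop :=
  ∃ x y : Plane, x ≠ y ∧ IsVertexOf x t ∧ IsVertexOf y t ∧
    e = segment ℝ x y ∧ e ⊆ frontier t

/-- A tiling by convex polygons is edge-to-edge if any two distinct tiles meet in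
the empty set, a common vertex, or a common edge. -/
def IsEdgeToEdge (T : Set (Set Plane)) : Prop :=
  ∀ t ∈ T, ∀ s ∈ T, t ≠ s →
    t ∩ s = ∅ ∨
    (∃ x : Plane, t ∩ s = {x} ∧ IsVertexOf x t ∧ IsVertexOf x s) ∨
    (∃ e : Set Plane, t ∩ s = e ∧ IsEdgeOf e t ∧ IsEdgeOf e s)

/-- A tiling is periodic if translations by two linearly independent vectors map
every tile onto a tile. -/
def IsPeriodic (T : Set (Set Plane)) : Prop :=
  ∃ u v : Plane, LinearIndependent ℝ ![u, v] ∧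
    (∀ t ∈ T, (fun x => x + u) '' t ∈ T) ∧ (∀ t ∈ T, (fun x => x + v) '' t ∈ T)

/-- An isometry is a symmetry of the tiling `T` if it maps the tiles of `T` onto
the tiles of `T`. -/
def IsSymmetryOf (g : Plane ≃ᵢ Plane) (T : Set (Set Plane)) : Prop :=
  (fun t => g '' t) '' T = T

/-- A tiling is isohedral if its symmetry group acts transitively on the tiles. -/
def IsIsohedral (T : Set (Set Plane)) : Prop :=
  ∀ t ∈ T, ∀ s ∈ T, ∃ g : Plane ≃ᵢ Plane, IsSymmetryOf g T ∧ g '' t = s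

/-- Two tiles are equivalent if some symmetry of the tiling maps one onto the other. -/
def SymEquiv (T : Set (Set Plane)) (t s : Set Plane) : Prop :=
  ∃ g : Plane ≃ᵢ Plane, IsSymmetryOf g T ∧ g '' t = s

/-- A direct (orientation-preserving) isometry of the plane: an affine isometry
whose linear part has positive determinant. -/
def IsDirectIsometry (g : Plane ≃ᵢ Plane) : Prop :=
  ∃ (L : Plane ≃ₗᵢ[ℝ] Plane) (w : Plane),
    0 < LinearMap.det (L.toLinearEquiv : Plane →ₗ[ℝ] Plane) ∧ ∀ x, g x = L x + w

/-- Relabeling of the vertices of a pentagon: a cyclic shift by `k`, with the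
orientation reversed when `r = true`. -/
def relabel (k : Fin 5) (r : Bool) (i : Fin 5) : Fin 5 := if r then k - i else k + i

/-- Planar cross product. -/
def cr (p q : Plane) : ℝ := p 0 * q 1 - p 1 * q 0

/-- Signed area of a triangle (doubled). -/
def ori (a b c : Plane) : ℝ := cr (b - a) (c - a)

lemma ori_eq (a b c : Plane) :
    ori a b c = (b 0 - a 0) * (c 1 - a 1) - (b 1 - a 1) * (c 0 - a 0) := by
  simp [ori, cr]

lemma ori_rot (a b c : Plane) : ori b c a = ori a b c := by
  simp only [ori_eq]; ring

lemma collinear_of_ori {a b c : Plane} (hab : a ≠ b) (h : ori a b c = 0) :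
    Collinear ℝ ({a, b, c} : Set Plane) := by
  rw [ori_eq] at h
  have hd : 0 < (b 0 - a 0) ^ 2 + (b 1 - a 1) ^ 2 := by
    by_contra hcon
    apply hab
    have h0 : b 0 - a 0 = 0 := by nlinarith [sq_nonneg (b 0 - a 0), sq_nonneg (b 1 - a 1)]
    have h1 : b 1 - a 1 = 0 := by nlinarith [sq_nonneg (b 0 - a 0), sq_nonneg (b 1 - a 1)]
    ext i
    fin_cases i
    · simp; linarith
    · simp; linarith
  rw [collinear_iff_of_mem (p₀ := a) (by simp)]
  refine ⟨b - a, ?_⟩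
  intro p hp
  simp only [Set.mem_insert_iff, Set.mem_singleton_iff] at hp
  rcases hp with rfl | rfl | rfl
  · exact ⟨0, by simp⟩
  · exact ⟨1, by simp⟩
  · refine ⟨((b 0 - a 0) * (p 0 - a 0) + (b 1 - a 1) * (p 1 - a 1)) /
      ((b 0 - a 0) ^ 2 + (b 1 - a 1) ^ 2), ?_⟩
    ext i
    fin_cases i
    · simp
      field_simp
      linear_combination (-(b 1 - a 1)) * h
    · simp
      field_simp
      linear_combination ((b 0 - a 0)) * h

lemma not_mem_seg {n : ℕ} [NeZero n] (P : ConvexPolygon n) {i j k : Fin n} (hj : j ≠ i) (hk : k ≠ i) :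
    P.V i ∉ segment ℝ (P.V j) (P.V k) := fun h =>
  P.strictlyConvex i (segment_subset_convexHull (Set.mem_image_of_mem _ hj)
    (Set.mem_image_of_mem _ hk) h)

lemma V_ne {n : ℕ} [NeZero n] (P : ConvexPolygon n) {i j : Fin n} (hj : j ≠ i) : P.V i ≠ P.V j := by
  intro h
  apply not_mem_seg P hj hj
  rw [h]
  exact left_mem_segment ℝ _ _

lemma not_collinear {n : ℕ} [NeZero n] (P : ConvexPolygon n) {i j k : Fin n}
    (hij : i ≠ j) (hik : i ≠ k) (hjk : j ≠ k) :
    ¬ Collinear ℝ ({P.V i, P.V j, P.V k} : Set Plane) := by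
  intro h
  rcases h.wbtw_or_wbtw_or_wbtw with h | h | h
  · exact not_mem_seg P hij hjk.symm (mem_segment_iff_wbtw.2 h)
  · exact not_mem_seg P hjk hik (mem_segment_iff_wbtw.2 h)
  · exact not_mem_seg P hik.symm hij.symm (mem_segment_iff_wbtw.2 h)

lemma ori_ne {n : ℕ} [NeZero n] (P : ConvexPolygon n) {i j k : Fin n}
    (hij : i ≠ j) (hik : i ≠ k) (hjk : j ≠ k) : ori (P.V i) (P.V j) (P.V k) ≠ 0 := fun h =>
  not_collinear P hij hik hjk (collinear_of_ori (V_ne P hij.symm) h)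

lemma interior_ne (P : ConvexPentagon) : (interior (convexHull ℝ (Set.range P.V))).Nonempty := by
  have h1 : AffineIndependent ℝ ![P.V 0, P.V 1, P.V 2] :=
    affineIndependent_iff_not_collinear_set.2
      (not_collinear P (by decide) (by decide) (by decide))
  have h2 : affineSpan ℝ (Set.range ![P.V 0, P.V 1, P.V 2]) = ⊤ := by
    rw [h1.affineSpan_eq_top_iff_card_eq_finrank_add_one]
    simp
  refine (interior_convexHull_nonempty_iff_affineSpan_eq_top.2 h2).mono
    (interior_mono (convexHull_mono ?_))
  rintro _ ⟨i, rfl⟩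
  fin_cases i <;> simp

lemma supp (P : ConvexPentagon) (i : Fin 5) : ∃ f : StrongDual ℝ Plane, f ≠ 0 ∧
    f (P.V (i + 1)) = f (P.V i) ∧ ∀ j, f (P.V j) ≤ f (P.V i) := by
  set K := convexHull ℝ (Set.range P.V) with hK
  set m := midpoint ℝ (P.V i) (P.V (i + 1)) with hm
  have hmK : m ∉ interior K := (P.cyclic i (midpoint_mem_segment _ _)).2
  have hne := interior_ne P
  have hconv : Convex ℝ K := convex_convexHull ℝ _
  obtain ⟨f, hf⟩ := geometric_hahn_banach_open_point hconv.interior isOpen_interior hmK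
  have hle : ∀ x ∈ K, f x ≤ f m := by
    intro x hx
    have hx' : x ∈ closure (interior K) := by
      rw [hconv.closure_interior_eq_closure_of_nonempty_interior hne]
      exact subset_closure hx
    exact closure_minimal (fun y hy => (hf y hy).le) (isClosed_le f.continuous continuous_const) hx'
  have hV : ∀ j, f (P.V j) ≤ f m := fun j => hle _ (subset_convexHull ℝ _ ⟨j, rfl⟩)
  have hfm : f m = (f (P.V i) + f (P.V (i + 1))) / 2 := by
    rw [hm, midpoint_eq_smul_add, map_smul, map_add, smul_eq_mul]
    simp; ring
  have a1 := hV i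
  have a2 := hV (i + 1)
  refine ⟨f, ?_, by linarith, fun j => by linarith [hV j]⟩
  rintro rfl
  obtain ⟨x, hx⟩ := hne
  simpa using hf x hx

lemma dual_eq (f : StrongDual ℝ Plane) :
    ∃ α β : ℝ, ∀ x, f x = α * x 0 + β * x 1 := by
  refine ⟨f !₂[1, 0], f !₂[0, 1], fun x => ?_⟩
  have : x = x 0 • !₂[(1:ℝ), 0] + x 1 • !₂[(0:ℝ), 1] := by
    ext k; fin_cases k <;> simp
  conv_lhs => rw [this]
  simp; ring

lemma ori_mul_nonneg (P : ConvexPentagon) (i j k : Fin 5) :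
    0 ≤ ori (P.V i) (P.V (i + 1)) (P.V j) * ori (P.V i) (P.V (i + 1)) (P.V k) := by
  obtain ⟨f, hf0, h1, h2⟩ := supp P i
  obtain ⟨α, β, hf⟩ := dual_eq f
  have hne : P.V i ≠ P.V (i + 1) := V_ne P (by fin_cases i <;> decide)
  have hj := h2 j
  have hk := h2 k
  have hαβ : α ^ 2 + β ^ 2 ≠ 0 := by
    intro h
    have ha : α = 0 := by nlinarith [sq_nonneg α, sq_nonneg β]
    have hb : β = 0 := by nlinarith [sq_nonneg α, sq_nonneg β]
    apply hf0
    ext x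
    simp [hf, ha, hb]
  simp only [hf] at h1 hj hk
  simp only [ori_eq]
  generalize P.V i = a at *
  generalize P.V (i+1) = b at *
  generalize P.V j = c at *
  generalize P.V k = d at *
  have hpos : 0 < α ^ 2 + β ^ 2 := lt_of_le_of_ne (by positivity) hαβ.symm
  -- `b - a = t (-β, α)`
  have key : ∀ x : Plane, (α ^ 2 + β ^ 2) * ((b 0 - a 0) * (x 1 - a 1) - (b 1 - a 1) * (x 0 - a 0))
      = (β * (b 0 - a 0) - α * (b 1 - a 1)) * (α * (x 0 - a 0) + β * (x 1 - a 1)) := by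
    intro x
    linear_combination (α * (x 1 - a 1) - β * (x 0 - a 0)) * h1
  have hprod : 0 ≤ (α * (c 0 - a 0) + β * (c 1 - a 1)) * (α * (d 0 - a 0) + β * (d 1 - a 1)) :=
    mul_nonneg_of_nonpos_of_nonpos (by linarith) (by linarith)
  have kc := key c
  have kd := key d
  have : 0 ≤ ((α ^ 2 + β ^ 2) * ((b 0 - a 0) * (c 1 - a 1) - (b 1 - a 1) * (c 0 - a 0))) *
     ((α ^ 2 + β ^ 2) * ((b 0 - a 0) * (d 1 - a 1) - (b 1 - a 1) * (d 0 - a 0))) := by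
    rw [kc, kd]
    have := mul_nonneg (sq_nonneg (β * (b 0 - a 0) - α * (b 1 - a 1))) hprod
    linarith
  by_contra hcon
  push Not at hcon
  have := mul_neg_of_pos_of_neg (mul_pos hpos hpos) hcon
  linarith

lemma exists_sign (P : ConvexPentagon) : ∃ σ : ℝ, σ ^ 2 = 1 ∧
    ∀ i, 0 < σ * ori (P.V i) (P.V (i + 1)) (P.V (i + 2)) := by
  have hne : ∀ i : Fin 5, ori (P.V i) (P.V (i + 1)) (P.V (i + 2)) ≠ 0 := fun i =>
    ori_ne P (by fin_cases i <;> decide) (by fin_cases i <;> decide) (by fin_cases i <;> decide)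
  have hstep : ∀ i : Fin 5, 0 < ori (P.V i) (P.V (i + 1)) (P.V (i + 2)) *
      ori (P.V (i + 1)) (P.V (i + 1 + 1)) (P.V (i + 1 + 2)) := by
    intro i
    have h := ori_mul_nonneg P (i + 1) i (i + 1 + 2)
    have e : i + 1 + 1 = i + 2 := by fin_cases i <;> decide
    have e2 := ori_rot (P.V i) (P.V (i + 1)) (P.V (i + 2))
    rw [← e] at e2
    rw [e2, e] at h
    exact lt_of_le_of_ne (by rw [e]; exact h) (mul_ne_zero (hne i) (hne (i + 1))).symm
  set s : Fin 5 → ℝ := fun i => ori (P.V i) (P.V (i + 1)) (P.V (i + 2)) with hs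
  have h0 : 0 < s 0 * s 1 := hstep 0
  have h1 : 0 < s 1 * s 2 := hstep 1
  have h2 : 0 < s 2 * s 3 := hstep 2
  have h3 : 0 < s 3 * s 4 := hstep 3
  change ∃ σ : ℝ, σ ^ 2 = 1 ∧ ∀ i, 0 < σ * s i
  rcases lt_or_gt_of_ne (hne 0) with h | h
  · refine ⟨-1, by norm_num, ?_⟩
    have g0 : s 0 < 0 := h
    have g1 : s 1 < 0 := by by_contra hc; nlinarith
    have g2 : s 2 < 0 := by by_contra hc; nlinarith
    have g3 : s 3 < 0 := by by_contra hc; nlinarith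
    have g4 : s 4 < 0 := by by_contra hc; nlinarith
    intro i
    fin_cases i <;> simp <;> assumption
  · refine ⟨1, by norm_num, ?_⟩
    have g0 : 0 < s 0 := h
    have g1 : 0 < s 1 := by by_contra hc; nlinarith
    have g2 : 0 < s 2 := by by_contra hc; nlinarith
    have g3 : 0 < s 3 := by by_contra hc; nlinarith
    have g4 : 0 < s 4 := by by_contra hc; nlinarith
    intro i
    fin_cases i <;> simp <;> assumption

/-- A counterclockwise list of points gives a convex pentagon. -/
def mkPent (V : Fin 5 → Plane)
    (h : ∀ i j : Fin 5, j ≠ i → j ≠ i + 1 → 0 < ori (V i) (V (i + 1)) (V j)) : ConvexPentagon where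
  V := V
  strictlyConvex := by
    intro i hi
    have hge : ∀ i j, 0 ≤ ori (V i) (V (i + 1)) (V j) := by
      intro i j
      by_cases h1 : j = i
      · subst h1; simp [ori_eq]
      by_cases h2 : j = i + 1
      · subst h2; simp only [ori_eq]; apply le_of_eq; ring
      exact (h i j h1 h2).le
    have hconv : Convex ℝ {x : Plane | 0 < ori (V (i - 1)) (V i) x + ori (V i) (V (i + 1)) x} := by
      intro x hx y hy a b ha hb hab
      simp only [Set.mem_ofPred_eq, ori_eq] at hx hy ⊢
      simp only [PiLp.add_apply, PiLp.smul_apply, smul_eq_mul]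
      have hb' : b = 1 - a := by linarith
      subst hb'
      rcases eq_or_lt_of_le ha with h0 | h0
      · subst h0; simpa using hy
      · nlinarith [mul_pos h0 hx, mul_nonneg hb hy.le]
    have hsub := convexHull_min (s := V '' {j | j ≠ i}) (t := _) (by
      rintro _ ⟨j, hj, rfl⟩
      simp only [Set.mem_ofPred_eq]
      have e : i - 1 + 1 = i := by simp
      have q1 := hge (i - 1) j
      rw [e] at q1
      by_cases h2 : j = i + 1
      · have := h (i - 1) j (by subst h2; fin_cases i <;> decide) (by rw [e]; exact hj)
        rw [e] at this
        linarith [hge i j]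
      · linarith [h i j hj h2]) hconv
    have := hsub hi
    simp only [Set.mem_ofPred_eq, ori_eq] at this
    nlinarith
  cyclic := by
    intro i x hx
    have hge : ∀ j, 0 ≤ ori (V i) (V (i + 1)) (V j) := by
      intro j
      by_cases h1 : j = i
      · subst h1; simp [ori_eq]
      by_cases h2 : j = i + 1
      · subst h2; simp only [ori_eq]; apply le_of_eq; ring
      exact (h i j h1 h2).le
    have hconv : Convex ℝ {x : Plane | 0 ≤ ori (V i) (V (i + 1)) x} := by
      intro x hx y hy a b ha hb hab
      simp only [Set.mem_ofPred_eq, ori_eq] at hx hy ⊢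
      simp only [PiLp.add_apply, PiLp.smul_apply, smul_eq_mul]
      have hb' : b = 1 - a := by linarith
      subst hb'
      nlinarith [mul_nonneg ha hx, mul_nonneg hb hy]
    have hsub := convexHull_min (s := Set.range V) (t := _) (by
      rintro _ ⟨j, rfl⟩
      exact hge j) hconv
    have hx0 : ori (V i) (V (i + 1)) x = 0 := by
      obtain ⟨a, b, ha, hb, hab, rfl⟩ := hx
      simp only [ori_eq, PiLp.add_apply, PiLp.smul_apply, smul_eq_mul]
      have hb' : b = 1 - a := by linarith
      subst hb'
      ring
    refine ⟨subset_closure (segment_subset_convexHull (Set.mem_range_self i)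
      (Set.mem_range_self (i + 1)) hx), fun hint => ?_⟩
    have hpos := h i (i + 2) (by fin_cases i <;> decide) (by fin_cases i <;> decide)
    -- move away from `V (i + 2)` inside the interior
    have hcont : Continuous fun t : ℝ => x + t • (x - V (i + 2)) := by fun_prop
    have hnh : ∀ᶠ t in nhds (0 : ℝ), x + t • (x - V (i + 2)) ∈ interior (convexHull ℝ (Set.range V)) := by
      apply hcont.continuousAt.eventually_mem
      simpa using isOpen_interior.mem_nhds hint
    obtain ⟨ε, hε, hball⟩ := Metric.eventually_nhds_iff.1 hnh
    have hm := hball (y := ε / 2) (by simp [abs_of_pos hε]; linarith)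
    have := hsub (interior_subset hm)
    simp only [Set.mem_ofPred_eq, ori_eq, PiLp.add_apply, PiLp.smul_apply, PiLp.sub_apply, smul_eq_mul] at this hx0 hpos
    nlinarith [mul_pos hε hpos]

/-- The normal form of the vertices. -/
def Vc (c s b1 b2 : ℝ) : Fin 5 → Plane :=
  ![!₂[b1, b2], !₂[0, 0], !₂[1, 0], !₂[2 * s ^ 2, -2 * c * s], !₂[0, 2 * b2]]

/-- The parameter relations of the normal form. -/
structure PentRel (c s b1 b2 : ℝ) : Prop where
  hc1 : -1 < c
  hc0 : c < 0
  hs : 0 < s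
  hb1 : b1 < 0
  hb2 : 0 < b2
  e1 : c ^ 2 + s ^ 2 = 1
  e2 : b1 ^ 2 + b2 ^ 2 = 1
  e3 : c * b1 + s * b2 = 2 * s ^ 2
  e4 : s * b1 + (2 - c) * b2 = -2 * c * s

lemma PentRel.b2_eq {c s b1 b2 : ℝ} (h : PentRel c s b1 b2) : b2 * (1 - 2 * c) = 2 * s := by
  linear_combination s * h.e3 - c * h.e4 + (2 * s - b2) * h.e1

lemma PentRel.b1_eq {c s b1 b2 : ℝ} (h : PentRel c s b1 b2) : b1 * (1 - 2 * c) = -4 * s ^ 2 := by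
  linear_combination s * h.e4 - (2 - c) * h.e3 - b1 * h.e1

lemma PentRel.quartic {c s b1 b2 : ℝ} (h : PentRel c s b1 b2) :
    16 * c ^ 4 - 40 * c ^ 2 + 4 * c + 19 = 0 := by
  have h1 := h.b1_eq
  have h2 := h.b2_eq
  have h3 : (1 - 2 * c) ^ 2 = 16 * (s ^ 2) ^ 2 + 4 * s ^ 2 := by
    calc (1 - 2 * c) ^ 2 = (b1 * (1 - 2 * c)) ^ 2 + (b2 * (1 - 2 * c)) ^ 2 := by
          linear_combination -(1 - 2 * c) ^ 2 * h.e2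
      _ = _ := by rw [h1, h2]; ring
  have h4 : s ^ 2 = 1 - c ^ 2 := by linarith [h.e1]
  rw [h4] at h3
  linarith

lemma PentRel.unique {c s b1 b2 c' s' b1' b2' : ℝ} (h : PentRel c s b1 b2) (h' : PentRel c' s' b1' b2') :
    c' = c ∧ s' = s ∧ b1' = b1 ∧ b2' = b2 := by
  have hcc : c' = c := by
    have q := h.quartic
    have q' := h'.quartic
    have hf : (c - c') * (16 * (c + c') * (c ^ 2 + c' ^ 2) - 40 * (c + c') + 4) = 0 := by
      linear_combination q - q'
    rcases mul_eq_zero.1 hf with h0 | h0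
    · linarith
    · exfalso
      have := h.hc1
      have := h.hc0
      have := h'.hc1
      have := h'.hc0
      have h1 : c ^ 2 + c' ^ 2 < 2 := by nlinarith
      nlinarith
  have hss : s' = s := by
    have e := h.e1
    have e' := h'.e1
    rw [hcc] at e'
    have : (s' - s) * (s' + s) = 0 := by linarith
    rcases mul_eq_zero.1 this with h0 | h0
    · linarith
    · linarith [h.hs, h'.hs]
  have hne : 1 - 2 * c ≠ 0 := by linarith [h.hc0]
  refine ⟨hcc, hss, ?_, ?_⟩
  · have e := h.b1_eq
    have e' := h'.b1_eq
    rw [hcc, hss] at e'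
    exact mul_right_cancel₀ hne (e'.trans e.symm)
  · have e := h.b2_eq
    have e' := h'.b2_eq
    rw [hcc, hss] at e'
    exact mul_right_cancel₀ hne (e'.trans e.symm)

lemma exists_rel : ∃ c s b1 b2 : ℝ, PentRel c s b1 b2 ∧ -0.712 < c ∧ c < -0.711 := by
  have hcont : Continuous fun c : ℝ => 16 * c ^ 4 - 40 * c ^ 2 + 4 * c + 19 := by fun_prop
  obtain ⟨c, hc, hq⟩ := intermediate_value_Ioo (a := (-0.712 : ℝ)) (b := -0.711) (by norm_num)
    hcont.continuousOn (show (0 : ℝ) ∈ _ by constructor <;> norm_num)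
  obtain ⟨hl, hu⟩ := hc
  have hpos : 0 < 1 - c ^ 2 := by nlinarith
  set s := Real.sqrt (1 - c ^ 2) with hs
  have hs0 : 0 < s := Real.sqrt_pos.2 hpos
  have hs2 : s ^ 2 = 1 - c ^ 2 := Real.sq_sqrt hpos.le
  have hd : 0 < 1 - 2 * c := by linarith
  have hq' : (1 - 2 * c) ^ 2 = 16 * s ^ 4 + 4 * s ^ 2 := by
    have : s ^ 4 = (1 - c ^ 2) ^ 2 := by rw [← hs2]; ring
    rw [this, hs2]
    simp only at hq
    linarith
  refine ⟨c, s, -4 * s ^ 2 / (1 - 2 * c), 2 * s / (1 - 2 * c), ⟨by linarith, by linarith, hs0,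
    ?_, by positivity, by linarith, ?_, ?_, ?_⟩, hl, hu⟩
  · apply div_neg_of_neg_of_pos _ hd
    nlinarith [pow_pos hs0 2]
  · field_simp
    linarith
  · have hne : 1 - 2 * c ≠ 0 := hd.ne'
    have : c * (-4 * s ^ 2 / (1 - 2 * c)) + s * (2 * s / (1 - 2 * c)) =
        2 * s ^ 2 * ((1 - 2 * c) / (1 - 2 * c)) := by ring
    rw [this, div_self hne, mul_one]
  · field_simp
    linarith

lemma sq_pinch {s a b : ℝ} (hs : 0 < s) (hb : 0 < b) (h1 : a ^ 2 < s ^ 2)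
    (h2 : s ^ 2 < b ^ 2) : a < s ∧ s < b :=
  ⟨lt_of_pow_lt_pow_left₀ 2 hs.le h1, lt_of_pow_lt_pow_left₀ 2 hb.le h2⟩

lemma box_ori {x y b1 b2 : ℝ} (l2 : 0.579 < b2) (u2 : b2 < 0.581) (l1 : -0.82 < b1)
    (u1 : b1 < -0.81) (lx : 0.98 < x) (ux : x < 0.99) (ly : 0.99 < y) (uy : y < 1.01)
    (V : Fin 5 → Plane)
    (hV : V = ![!₂[b1, b2], !₂[0, 0], !₂[1, 0], !₂[x, y], !₂[0, 2 * b2]]) :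
    ∀ i j : Fin 5, j ≠ i → j ≠ i + 1 → 0 < ori (V i) (V (i + 1)) (V j) := by
  subst hV
  have p1 := mul_pos (sub_pos.2 l2) (sub_pos.2 lx)
  have p2 := mul_pos (sub_pos.2 l2) (sub_pos.2 ux)
  have p3 := mul_pos (sub_pos.2 u2) (sub_pos.2 lx)
  have p4 := mul_pos (sub_pos.2 u2) (sub_pos.2 ux)
  have q1 := mul_pos (sub_pos.2 l1) (sub_pos.2 ly)
  have q2 := mul_pos (sub_pos.2 l1) (sub_pos.2 uy)
  have q3 := mul_pos (sub_pos.2 u1) (sub_pos.2 ly)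
  have q4 := mul_pos (sub_pos.2 u1) (sub_pos.2 uy)
  have r1 := mul_pos (sub_pos.2 l1) (sub_pos.2 l2)
  have r2 := mul_pos (sub_pos.2 l1) (sub_pos.2 u2)
  have r3 := mul_pos (sub_pos.2 u1) (sub_pos.2 l2)
  have r4 := mul_pos (sub_pos.2 u1) (sub_pos.2 u2)
  intro i j hi hj
  simp only [ori_eq]
  fin_cases i <;> fin_cases j <;>
    first
    | exact absurd rfl hi
    | exact absurd rfl hj
    | (simp
       linarith)

lemma Vc_ori {c s b1 b2 : ℝ} (h : PentRel c s b1 b2) (hl : -0.712 < c) (hu : c < -0.711) :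
    ∀ i j : Fin 5, j ≠ i → j ≠ i + 1 →
      0 < ori (Vc c s b1 b2 i) (Vc c s b1 b2 (i + 1)) (Vc c s b1 b2 j) := by
  have e1 := h.e1
  have hs0 := h.hs
  obtain ⟨hs1, hs2⟩ := sq_pinch (s := s) (a := 0.702) (b := 0.7034) hs0 (by norm_num)
    (by nlinarith) (by nlinarith)
  have hd := h.b2_eq
  have hd1 := h.b1_eq
  have l2 : 0.579 < b2 := by nlinarith
  have u2 : b2 < 0.581 := by nlinarith
  have l1 : -0.82 < b1 := by nlinarith
  have u1 : b1 < -0.81 := by nlinarith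
  have lx : 0.98 < 2 * s ^ 2 := by nlinarith
  have ux : 2 * s ^ 2 < 0.99 := by nlinarith
  have ly : 0.99 < -2 * c * s := by nlinarith
  have uy : -2 * c * s < 1.01 := by nlinarith
  exact box_ori l2 u2 l1 u1 lx ux ly uy _ rfl

lemma inner_eq (p q : Plane) : inner ℝ p q = p 0 * q 0 + p 1 * q 1 := by
  rw [PiLp.inner_apply]
  simp [Fin.sum_univ_two]
  ring

lemma norm_sq_eq (p : Plane) : ‖p‖ ^ 2 = p 0 ^ 2 + p 1 ^ 2 := by
  rw [EuclideanSpace.norm_sq_eq]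
  simp [Fin.sum_univ_two]

lemma dist_one_iff (a b : Plane) : dist a b = 1 ↔ (a 0 - b 0) ^ 2 + (a 1 - b 1) ^ 2 = 1 := by
  rw [dist_eq_norm]
  have h := norm_sq_eq (a - b)
  simp only [PiLp.sub_apply] at h
  rw [← h]
  constructor
  · intro h; rw [h]; norm_num
  · intro h
    exact (pow_eq_one_iff_of_nonneg (norm_nonneg _) (by norm_num)).1 h

lemma angle_eq {a b c : Plane} (h1 : dist b a = 1) (h2 : dist b c = 1) :
    EuclideanGeometry.angle a b c =
      Real.arccos ((c 0 - b 0) * (a 0 - b 0) + (c 1 - b 1) * (a 1 - b 1)) := by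
  rw [EuclideanGeometry.angle, InnerProductGeometry.angle, inner_eq]
  rw [dist_comm, dist_eq_norm] at h1 h2
  simp only [vsub_eq_sub, h1, h2, PiLp.sub_apply]
  congr 1
  ring

lemma angle_facts {a b c : Plane} {σ : ℝ} (hσ : σ ^ 2 = 1) (h1 : dist b a = 1) (h2 : dist b c = 1)
    (ho : 0 < σ * ori a b c) {θ : ℝ} (hθ : θ = EuclideanGeometry.angle a b c) :
    0 < Real.sin θ ∧
    Real.cos θ = (c 0 - b 0) * (a 0 - b 0) + (c 1 - b 1) * (a 1 - b 1) ∧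
    Real.sin θ = σ * ((c 0 - b 0) * (a 1 - b 1) - (c 1 - b 1) * (a 0 - b 0)) := by
  have n1 := (dist_one_iff _ _).1 h1
  have n2 := (dist_one_iff _ _).1 h2
  rw [ori_eq] at ho
  have hsq : ((c 0 - b 0) * (a 0 - b 0) + (c 1 - b 1) * (a 1 - b 1)) ^ 2 +
      ((c 0 - b 0) * (a 1 - b 1) - (c 1 - b 1) * (a 0 - b 0)) ^ 2 = 1 := by
    linear_combination ((c 0 - b 0) ^ 2 + (c 1 - b 1) ^ 2) * n1 + n2
  have hcos : Real.cos θ = (c 0 - b 0) * (a 0 - b 0) + (c 1 - b 1) * (a 1 - b 1) := by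
    rw [hθ, angle_eq h1 h2, Real.cos_arccos] <;> nlinarith
  have hs0 : 0 ≤ Real.sin θ := by
    rw [hθ]
    exact Real.sin_nonneg_of_nonneg_of_le_pi (EuclideanGeometry.angle_nonneg _ _ _)
      (EuclideanGeometry.angle_le_pi _ _ _)
  have ho' : 0 < σ * ((c 0 - b 0) * (a 1 - b 1) - (c 1 - b 1) * (a 0 - b 0)) := by
    calc 0 < _ := ho
      _ = _ := by ring
  have hsin : Real.sin θ = σ * ((c 0 - b 0) * (a 1 - b 1) - (c 1 - b 1) * (a 0 - b 0)) := by
    have hsc := Real.sin_sq_add_cos_sq θ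
    rw [hcos] at hsc
    refine (pow_left_inj₀ hs0 ho'.le (n := 2) (by norm_num)).1 ?_
    rw [mul_pow, hσ]
    linarith
  exact ⟨by rw [hsin]; exact ho', hcos, hsin⟩

lemma two_angle {A B : ℝ} (h : 2 * B + A = 2 * Real.pi) :
    Real.cos A = Real.cos B ^ 2 - Real.sin B ^ 2 ∧ Real.sin A = -2 * Real.sin B * Real.cos B := by
  have : A = 2 * Real.pi - 2 * B := by linarith
  rw [this, Real.cos_two_pi_sub, Real.sin_two_pi_sub, Real.cos_two_mul, Real.sin_two_mul]
  constructor
  · linarith [Real.sin_sq_add_cos_sq B]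
  · ring

/-- The rotation or reflection with first column `u`. -/
def frame (u : Plane) (σ : ℝ) (hσ : σ ^ 2 = 1) (hu : u 0 ^ 2 + u 1 ^ 2 = 1) : Plane →ₗᵢ[ℝ] Plane where
  toFun x := !₂[x 0 * u 0 - σ * x 1 * u 1, x 0 * u 1 + σ * x 1 * u 0]
  map_add' x y := by ext i; fin_cases i <;> simp <;> ring
  map_smul' r x := by ext i; fin_cases i <;> simp <;> ring
  norm_map' x := by
    refine (pow_left_inj₀ (norm_nonneg _) (norm_nonneg _) (n := 2) (by norm_num)).1 ?_
    rw [norm_sq_eq, norm_sq_eq]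
    simp
    linear_combination (x 0 ^ 2 + σ ^ 2 * x 1 ^ 2) * hu + x 1 ^ 2 * hσ

lemma solve_q {p0 p1 q0 q1 σ C S : ℝ} (hσ : σ ^ 2 = 1) (hp : p0 ^ 2 + p1 ^ 2 = 1)
    (hC : C = p0 * q0 + p1 * q1) (hS : S = σ * (p0 * q1 - p1 * q0)) :
    q0 = C * p0 - σ * S * p1 ∧ q1 = C * p1 + σ * S * p0 := by
  subst hC hS
  constructor
  · linear_combination (-q0) * hp + (p0 * q1 - p1 * q0) * p1 * hσ
  · linear_combination (-q1) * hp - (p0 * q1 - p1 * q0) * p0 * hσ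

lemma solve_p {p0 p1 q0 q1 σ C S : ℝ} (hσ : σ ^ 2 = 1) (hq : q0 ^ 2 + q1 ^ 2 = 1)
    (hC : C = p0 * q0 + p1 * q1) (hS : S = σ * (p0 * q1 - p1 * q0)) :
    p0 = C * q0 + σ * S * q1 ∧ p1 = C * q1 - σ * S * q0 := by
  subst hC hS
  constructor
  · linear_combination (-p0) * hq - (p0 * q1 - p1 * q0) * q1 * hσ
  · linear_combination (-p1) * hq + (p0 * q1 - p1 * q0) * q0 * hσ

/-- The coordinate computation: `a, o, u, d, f` are the vertices `V 0, …, V 4`. -/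
lemma coords {a0 a1 o0 o1 u0 u1 d0 d1 f0 f1 σ c s b1 b2 : ℝ} (hσ : σ ^ 2 = 1)
    (e1 : c ^ 2 + s ^ 2 = 1) (e2 : b1 ^ 2 + b2 ^ 2 = 1)
    (n0 : (a0 - o0) ^ 2 + (a1 - o1) ^ 2 = 1) (n1 : (o0 - u0) ^ 2 + (o1 - u1) ^ 2 = 1)
    (n4 : (f0 - a0) ^ 2 + (f1 - a1) ^ 2 = 1)
    (cA : b1 ^ 2 - b2 ^ 2 = (o0 - a0) * (f0 - a0) + (o1 - a1) * (f1 - a1))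
    (fA : -2 * b2 * b1 = σ * ((o0 - a0) * (f1 - a1) - (o1 - a1) * (f0 - a0)))
    (cB : b1 = (u0 - o0) * (a0 - o0) + (u1 - o1) * (a1 - o1))
    (fB : b2 = σ * ((u0 - o0) * (a1 - o1) - (u1 - o1) * (a0 - o0)))
    (cC : c ^ 2 - s ^ 2 = (d0 - u0) * (o0 - u0) + (d1 - u1) * (o1 - u1))
    (fC : -2 * s * c = σ * ((d0 - u0) * (o1 - u1) - (d1 - u1) * (o0 - u0)))
    (cE : c = (a0 - f0) * (d0 - f0) + (a1 - f1) * (d1 - f1))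
    (fE : s = σ * ((a0 - f0) * (d1 - f1) - (a1 - f1) * (d0 - f0))) :
    (a0 - o0 = b1 * (u0 - o0) - σ * b2 * (u1 - o1) ∧
     a1 - o1 = b1 * (u1 - o1) + σ * b2 * (u0 - o0)) ∧
    (d0 - o0 = 2 * s ^ 2 * (u0 - o0) - σ * (-2 * c * s) * (u1 - o1) ∧
     d1 - o1 = 2 * s ^ 2 * (u1 - o1) + σ * (-2 * c * s) * (u0 - o0)) ∧
    (f0 - o0 = - σ * (2 * b2) * (u1 - o1) ∧ f1 - o1 = σ * (2 * b2) * (u0 - o0)) ∧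
    c * b1 + s * b2 = 2 * s ^ 2 ∧ s * b1 + (2 - c) * b2 = -2 * c * s := by
  have n1' : (u0 - o0) ^ 2 + (u1 - o1) ^ 2 = 1 := by linarith
  have n0' : (o0 - a0) ^ 2 + (o1 - a1) ^ 2 = 1 := by linarith
  have n4' : (a0 - f0) ^ 2 + (a1 - f1) ^ 2 = 1 := by linarith
  obtain ⟨x0, y0⟩ := solve_q hσ n1' cB fB
  obtain ⟨x3, y3⟩ := solve_p hσ n1 cC fC
  obtain ⟨x4, y4⟩ := solve_q hσ n0' cA fA
  obtain ⟨x5, y5⟩ := solve_q hσ n4' cE fE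
  clear cA fA cB fB cC fC cE fE n0 n4 n0' n4' n1
  have x3' : d0 - o0 = 2 * s ^ 2 * (u0 - o0) - σ * (-2 * c * s) * (u1 - o1) := by
    linear_combination x3 - (u0 - o0) * e1
  have y3' : d1 - o1 = 2 * s ^ 2 * (u1 - o1) + σ * (-2 * c * s) * (u0 - o0) := by
    linear_combination y3 - (u1 - o1) * e1
  have x4' : f0 - o0 = - σ * (2 * b2) * (u1 - o1) := by
    linear_combination x4 + (1 - (b1 ^ 2 - b2 ^ 2)) * x0 + σ * (-2 * b2 * b1) * y0
      - (b1 * (u0 - o0) + σ * b2 * (u1 - o1)) * e2 - 2 * b1 * b2 ^ 2 * (u0 - o0) * hσ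
  have y4' : f1 - o1 = σ * (2 * b2) * (u0 - o0) := by
    linear_combination y4 + (1 - (b1 ^ 2 - b2 ^ 2)) * y0 - σ * (-2 * b2 * b1) * x0
      - (b1 * (u1 - o1) - σ * b2 * (u0 - o0)) * e2 - 2 * b1 * b2 ^ 2 * (u1 - o1) * hσ
  have X0 : (c * b1 + s * b2 - 2 * s ^ 2) * (u0 - o0)
      - σ * (s * b1 + (2 - c) * b2 + 2 * c * s) * (u1 - o1) = 0 := by
    linear_combination x3' - x4' - x5 - c * x0 + c * x4' + σ * s * y0 - σ * s * y4' 
      - s * b2 * (u0 - o0) * hσ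
  have X1 : (c * b1 + s * b2 - 2 * s ^ 2) * (u1 - o1)
      + σ * (s * b1 + (2 - c) * b2 + 2 * c * s) * (u0 - o0) = 0 := by
    linear_combination y3' - y4' - y5 - c * y0 + c * y4' - σ * s * x0 + σ * s * x4' 
      - s * b2 * (u1 - o1) * hσ
  refine ⟨⟨x0, y0⟩, ⟨x3', y3'⟩, ⟨x4', y4'⟩, ?_, ?_⟩
  · linear_combination (u0 - o0) * X0 + (u1 - o1) * X1 - (c * b1 + s * b2 - 2 * s ^ 2) * n1'
  · linear_combination σ * (u0 - o0) * X1 - σ * (u1 - o1) * X0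
      - σ ^ 2 * (s * b1 + (2 - c) * b2 + 2 * c * s) * n1' - (s * b1 + (2 - c) * b2 + 2 * c * s) * hσ

lemma neg_of_two {b s S : ℝ} (hs : 0 < s) (hS : 0 < S) (h : S = -2 * s * b) : b < 0 := by
  by_contra hc
  push Not at hc
  nlinarith [mul_nonneg hs.le hc]

lemma gt_neg_one {c s : ℝ} (hs : 0 < s) (h : c ^ 2 + s ^ 2 = 1) : -1 < c := by
  nlinarith [pow_pos hs 2]

lemma normal_form (Q : ConvexPentagon) (hside : ∀ i : Fin 5, Q.side i = 1)
    (hB : 2 * Q.angle 1 + Q.angle 0 = 2 * Real.pi)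
    (hE : 2 * Q.angle 4 + Q.angle 2 = 2 * Real.pi) :
    ∃ c s b1 b2 : ℝ, PentRel c s b1 b2 ∧ ∃ (L : Plane →ₗᵢ[ℝ] Plane) (w : Plane),
      ∀ i, Q.V i = L (Vc c s b1 b2 i) + w := by
  obtain ⟨σ, hσ, hor⟩ := exists_sign Q
  have d0 : dist (Q.V 0) (Q.V 1) = 1 := hside 0
  have d1 : dist (Q.V 1) (Q.V 2) = 1 := hside 1
  have d2 : dist (Q.V 2) (Q.V 3) = 1 := hside 2
  have d3 : dist (Q.V 3) (Q.V 4) = 1 := hside 3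
  have d4 : dist (Q.V 4) (Q.V 0) = 1 := hside 4
  have o0 : 0 < σ * ori (Q.V 4) (Q.V 0) (Q.V 1) := hor 4
  have o1 : 0 < σ * ori (Q.V 0) (Q.V 1) (Q.V 2) := hor 0
  have o2 : 0 < σ * ori (Q.V 1) (Q.V 2) (Q.V 3) := hor 1
  have o4 : 0 < σ * ori (Q.V 3) (Q.V 4) (Q.V 0) := hor 3
  obtain ⟨sA, cA, fA⟩ := angle_facts hσ (by rw [dist_comm]; exact d4) d0 o0
    (θ := Q.angle 0) rfl
  obtain ⟨sB, cB, fB⟩ := angle_facts hσ (by rw [dist_comm]; exact d0) d1 o1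
    (θ := Q.angle 1) rfl
  obtain ⟨sC, cC, fC⟩ := angle_facts hσ (by rw [dist_comm]; exact d1) d2 o2
    (θ := Q.angle 2) rfl
  obtain ⟨sE, cE, fE⟩ := angle_facts hσ (by rw [dist_comm]; exact d3) d4 o4
    (θ := Q.angle 4) rfl
  obtain ⟨tA, uA⟩ := two_angle hB
  obtain ⟨tC, uC⟩ := two_angle hE
  have e1 := Real.cos_sq_add_sin_sq (Q.angle 4)
  have e2 := Real.cos_sq_add_sin_sq (Q.angle 1)
  generalize Real.cos (Q.angle 0) = cosA at *
  generalize Real.sin (Q.angle 0) = sinA at *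
  generalize Real.cos (Q.angle 2) = cosC at *
  generalize Real.sin (Q.angle 2) = sinC at *
  generalize Real.cos (Q.angle 1) = b1 at *
  generalize Real.sin (Q.angle 1) = b2 at *
  generalize Real.cos (Q.angle 4) = c at *
  generalize Real.sin (Q.angle 4) = s at *
  rw [dist_one_iff] at d0 d1 d2 d3 d4
  have hu : (Q.V 2 - Q.V 1) 0 ^ 2 + (Q.V 2 - Q.V 1) 1 ^ 2 = 1 := by
    simp only [PiLp.sub_apply]; linarith
  set L := frame (Q.V 2 - Q.V 1) σ hσ hu with hL
  have hLx : ∀ x, L x = !₂[x 0 * (Q.V 2 - Q.V 1) 0 - σ * x 1 * (Q.V 2 - Q.V 1) 1,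
    x 0 * (Q.V 2 - Q.V 1) 1 + σ * x 1 * (Q.V 2 - Q.V 1) 0] := fun x => rfl
  have hb1 : b1 < 0 := neg_of_two sB sA uA
  have hc0 : c < 0 := neg_of_two sE sC uC
  have hc1 : -1 < c := gt_neg_one sE e1
  subst tA tC uA uC
  obtain ⟨⟨x0, y0⟩, ⟨x3, y3⟩, ⟨x4, y4⟩, e3, e4⟩ :=
    coords hσ e1 e2 d0 d1 d4 cA fA cB fB cC fC cE fE
  refine ⟨c, s, b1, b2, ⟨hc1, hc0, sE, hb1, sB, e1, e2, e3, e4⟩, L, Q.V 1, ?_⟩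
  · intro i
    ext k
    fin_cases i <;> fin_cases k <;> simp [hLx, Vc] <;>
      linarith only [x0, y0, x3, y3, x4, y4]

lemma exists_pent {c s b1 b2 : ℝ} (h : PentRel c s b1 b2) (hl : -0.712 < c) (hu : c < -0.711) :
    ∃ P : ConvexPentagon, P.V = Vc c s b1 b2 ∧ (∀ i : Fin 5, P.side i = 1) ∧
      (2 * P.angle 1 + P.angle 0 = 2 * Real.pi) ∧
      (2 * P.angle 4 + P.angle 2 = 2 * Real.pi) := by
  refine ⟨mkPent _ (Vc_ori h hl hu), rfl, ?_⟩
  set P := mkPent _ (Vc_ori h hl hu) with hP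
  have hV : P.V = Vc c s b1 b2 := rfl
  have e1 := h.e1
  have e2 := h.e2
  have e3 := h.e3
  have e4 := h.e4
  have hside : ∀ i : Fin 5, P.side i = 1 := by
    intro i
    rw [ConvexPolygon.side, dist_one_iff, hV]
    fin_cases i <;> simp [Vc]
    · linarith
    · linear_combination 4 * s ^ 2 * e1
    · have e4' : -(2 * c * s) - 2 * b2 = s * b1 - c * b2 := by linarith
      rw [e4', ← e3]
      linear_combination (b1 ^ 2 + b2 ^ 2) * e1 + e2
    · linarith
  have d0 : dist (P.V 0) (P.V 1) = 1 := hside 0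
  have d1 : dist (P.V 1) (P.V 2) = 1 := hside 1
  have d2 : dist (P.V 2) (P.V 3) = 1 := hside 2
  have d3 : dist (P.V 3) (P.V 4) = 1 := hside 3
  have d4 : dist (P.V 4) (P.V 0) = 1 := hside 4
  have aA : P.angle 0 = Real.arccos (2 * b1 ^ 2 - 1) := by
    refine (angle_eq (a := P.V 4) (b := P.V 0) (c := P.V 1) (by rw [dist_comm]; exact d4) d0).trans ?_
    congr 1
    simp [hV, Vc]
    linarith
  have aB : P.angle 1 = Real.arccos b1 := by
    refine (angle_eq (a := P.V 0) (b := P.V 1) (c := P.V 2) (by rw [dist_comm]; exact d0) d1).trans ?_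
    congr 1
    simp [hV, Vc]
  have aC : P.angle 2 = Real.arccos (2 * c ^ 2 - 1) := by
    refine (angle_eq (a := P.V 1) (b := P.V 2) (c := P.V 3) (by rw [dist_comm]; exact d1) d2).trans ?_
    congr 1
    simp [hV, Vc]
    linarith
  have aE : P.angle 4 = Real.arccos c := by
    refine (angle_eq (a := P.V 3) (b := P.V 4) (c := P.V 0) (by rw [dist_comm]; exact d3) d4).trans ?_
    congr 1
    simp [hV, Vc]
    linear_combination (-b1) * e3 + b2 * e4 + c * e2
  have key : ∀ x : ℝ, -1 ≤ x → x ≤ 0 →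
      2 * Real.arccos x + Real.arccos (2 * x ^ 2 - 1) = 2 * Real.pi := by
    intro x hx1 hx0
    have h1 : Real.cos (2 * Real.pi - 2 * Real.arccos x) = 2 * x ^ 2 - 1 := by
      rw [Real.cos_two_pi_sub, Real.cos_two_mul, Real.cos_arccos hx1 (by linarith)]
    have h2 : Real.pi / 2 ≤ Real.arccos x := by
      rw [Real.arccos]
      linarith [Real.arcsin_nonpos.2 hx0]
    rw [← h1, Real.arccos_cos]
    · ring
    · linarith [Real.arccos_le_pi x]
    · linarith
  have hb := h.hb1
  refine ⟨hside, ?_, ?_⟩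
  · rw [aA, aB]
    exact key _ (by nlinarith [h.hb2]) hb.le
  · rw [aC, aE]
    exact key _ h.hc1.le h.hc0.le

lemma final_iso (P Q : ConvexPentagon) (L : Plane →ₗᵢ[ℝ] Plane) (w : Plane)
    (h : ∀ i, Q.V i = L (P.V i) + w) : ∃ g : Plane ≃ᵢ Plane, g '' P.carrier = Q.carrier := by
  refine ⟨(L.toLinearIsometryEquiv rfl).toIsometryEquiv.trans (IsometryEquiv.addRight w), ?_⟩
  let f : Plane →ᵃ[ℝ] Plane := L.toLinearMap.toAffineMap + AffineMap.const ℝ Plane w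
  have hf : ∀ x, f x = L x + w := fun x => by simp [f]
  have hg : ⇑((L.toLinearIsometryEquiv rfl).toIsometryEquiv.trans (IsometryEquiv.addRight w)) = f := by
    ext1 x
    rw [hf]
    simp
  rw [hg, ConvexPolygon.carrier, ConvexPolygon.carrier, AffineMap.image_convexHull, ← Set.range_comp]
  congr 2
  ext1 i
  rw [h i, Function.comp, hf]

/-- there is an equilateral convex pentagon (all sides of length 1)
with `2B + A = 360°` and `2E + C = 360°` (Type 7), and it is unique up to
isometries of the plane. -/
theorem statement_14 :
    ∃ P : ConvexPentagon, (∀ i : Fin 5, P.side i = 1) ∧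
      (2 * P.angle 1 + P.angle 0 = 2 * Real.pi) ∧
      (2 * P.angle 4 + P.angle 2 = 2 * Real.pi) ∧
      ∀ Q : ConvexPentagon, (∀ i : Fin 5, Q.side i = 1) →
        (2 * Q.angle 1 + Q.angle 0 = 2 * Real.pi) →
        (2 * Q.angle 4 + Q.angle 2 = 2 * Real.pi) →
        ∃ g : Plane ≃ᵢ Plane, g '' P.carrier = Q.carrier := by

  obtain ⟨c, s, b1, b2, hrel, hl, hu⟩ := exists_rel
  obtain ⟨P, hPV, hPs, hPB, hPE⟩ := exists_pent hrel hl hu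
  refine ⟨P, hPs, hPB, hPE, ?_⟩
  intro Q hQs hQB hQE
  obtain ⟨c', s', b1', b2', hrel', L, w, hLw⟩ := normal_form Q hQs hQB hQE
  obtain ⟨rfl, rfl, rfl, rfl⟩ := hrel.unique hrel'
  exact final_iso P Q L w (by rw [hPV]; exact hLw)
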